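/- For every n ≥ 1 and every x ∈ ℝ, the Legendre polynomials satisfy the derivative identity (1 − x²)·Pₙ′(x) = −n·x·Pₙ(x) + n·Pₙ₋₁(x). -/

import Mathlib

/-- The Legendre polynomials (as real functions), defined by the three-term recursion
`P₀ = 1`, `P₁ = x`, and `(n+2)·Pₙ₊₂(x) = (2n+3)·x·Pₙ₊₁(x) − (n+1)·Pₙ(x)`. -/
noncomputable def legendreP : ℕ → ℝ → ℝ
  | 0 => fun _ => 1
  | 1 => fun x => x
  | (n + 2) => fun x =>
      ((2 * (n : ℝ) + 3) * x * legendreP (n + 1) x - ((n : ℝ) + 1) * legendreP n x) /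
        ((n : ℝ) + 2)

/-!
The recursion expresses `n Pₙ₋₁` through `Pₙ` and `Pₙ₊₁`, which turns the identity into
`(1 - x²) Pₙ' = (n + 1) (x Pₙ - Pₙ₊₁)`. This form also makes sense for `n = 0`, and it follows by
two-step induction, since differentiating the recursion expresses `Pₙ₊₂'` through `Pₙ'`, `Pₙ₊₁'`
and `Pₙ₊₁`.
-/

@[simp]
theorem legendreP_zero : legendreP 0 = fun _ => 1 := by
  rw [legendreP]

@[simp]
theorem legendreP_one : legendreP 1 = fun x => x := by
  rw [legendreP]

theorem add_two_mul_legendreP_add_two (n : ℕ) (x : ℝ) :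
    ((n : ℝ) + 2) * legendreP (n + 2) x =
      (2 * (n : ℝ) + 3) * x * legendreP (n + 1) x - ((n : ℝ) + 1) * legendreP n x := by
  rw [legendreP]
  exact mul_div_cancel₀ _ (by positivity)

@[fun_prop]
theorem differentiable_legendreP (n : ℕ) : Differentiable ℝ (legendreP n) := by
  induction n using Nat.twoStepInduction with
  | zero => simp
  | one => simp
  | more n ih₀ ih₁ =>
    rw [legendreP]
    fun_prop

theorem add_two_mul_deriv_legendreP_add_two (n : ℕ) (x : ℝ) :
    ((n : ℝ) + 2) * deriv (legendreP (n + 2)) x =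
      (2 * (n : ℝ) + 3) * (legendreP (n + 1) x + x * deriv (legendreP (n + 1)) x) -
        ((n : ℝ) + 1) * deriv (legendreP n) x := by
  have hasDerivAt_legendreP (k : ℕ) : HasDerivAt (legendreP k) (deriv (legendreP k) x) x :=
    (differentiable_legendreP k x).hasDerivAt
  have hasDerivAt_right :=
    (((hasDerivAt_id' x).const_mul (2 * (n : ℝ) + 3)).mul (hasDerivAt_legendreP (n + 1))).sub
      ((hasDerivAt_legendreP n).const_mul ((n : ℝ) + 1))
  have hasDerivAt_left := (hasDerivAt_legendreP (n + 2)).const_mul ((n : ℝ) + 2)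
  rw [funext (add_two_mul_legendreP_add_two n)] at hasDerivAt_left
  linear_combination hasDerivAt_left.unique hasDerivAt_right

theorem one_sub_sq_mul_deriv_legendreP (n : ℕ) (x : ℝ) :
    (1 - x ^ 2) * deriv (legendreP n) x =
      ((n : ℝ) + 1) * (x * legendreP n x - legendreP (n + 1) x) := by
  induction n using Nat.twoStepInduction with
  | zero => simp
  | one =>
    have recurrence : 2 * legendreP 2 x = 3 * x * x - 1 := by
      simpa using add_two_mul_legendreP_add_two 0 x
    simp only [legendreP_one, deriv_id'', Nat.cast_one, Nat.reduceAdd]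
    linear_combination recurrence
  | more n ih₀ ih₁ =>
    have recurrence₀ := add_two_mul_legendreP_add_two n x
    have recurrence₁ := add_two_mul_legendreP_add_two (n + 1) x
    have deriv_recurrence := add_two_mul_deriv_legendreP_add_two n x
    have n_add_two_ne_zero : (n : ℝ) + 2 ≠ 0 := by positivity
    push_cast at ih₁ recurrence₁ ⊢
    apply mul_left_cancel₀ n_add_two_ne_zero
    linear_combination (1 - x ^ 2) * deriv_recurrence + (2 * (n : ℝ) + 3) * x * ih₁ -
      ((n : ℝ) + 1) * ih₀ + ((n : ℝ) + 2) * recurrence₁ - ((n : ℝ) + 1) * x * recurrence₀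

/-- Derivative identity for Legendre polynomials:
`(1 − x²)·Pₙ′(x) = −n·x·Pₙ(x) + n·Pₙ₋₁(x)` for all `n ≥ 1`. -/
theorem legendreP_deriv_identity (n : ℕ) (hn : 1 ≤ n) (x : ℝ) :
    (1 - x ^ 2) * deriv (legendreP n) x =
      -(n : ℝ) * x * legendreP n x + (n : ℝ) * legendreP (n - 1) x := by
  obtain ⟨k, rfl⟩ := Nat.exists_eq_add_of_le' hn
  have deriv_formula := one_sub_sq_mul_deriv_legendreP (k + 1) x
  have recurrence := add_two_mul_legendreP_add_two k x
  rw [Nat.add_sub_cancel]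
  push_cast at deriv_formula ⊢
  linear_combination deriv_formula - recurrence
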